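/- For a probability measure F supported on [0,∞) with finite first moment and mean m > 0, the Gini index G(F) = 1 - (1/m)∫₀^∞ (1-F(x))² dx admits the Fourier representation G(F) = 1 - (1/(2πm)) ∫_ℝ |1 - f̂(ξ)|²/ξ² dξ. -/

import Mathlib

open MeasureTheory Complex

/-- Fourier transform `f̂(ξ) = ∫ e^{-iξx} dF(x)` of a measure on `ℝ`. -/
noncomputable def ft (μ : Measure ℝ) (ξ : ℝ) : ℂ :=
  ∫ x, Complex.exp (-(Complex.I * ξ * x)) ∂μ

/-- Derivative of the Fourier transform: `f̂'(ξ) = -i ∫ x e^{-iξx} dF(x)`. -/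
noncomputable def ft' (μ : Measure ℝ) (ξ : ℝ) : ℂ :=
  ∫ x, -(Complex.I * x) * Complex.exp (-(Complex.I * ξ * x)) ∂μ

/-- The Fourier-based inequality index `T(F) = (1/2) sup_ξ |f̂(ξ) - f̂'(ξ)/f̂'(0)|`. -/
noncomputable def Tindex (μ : Measure ℝ) : ℝ :=
  (1 / 2) * ⨆ ξ : ℝ, ‖ft μ ξ - ft' μ ξ / ft' μ 0‖

/-!
`1 - F` on `[0, ∞)` is the difference `F₀ - F` of the distribution functions of `δ₀` and of the
given law, so the identity is an instance of a Parseval formula for `F_X - F_Y`, valid for any two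
random variables `X`, `Y` on one finite measure space with `X - Y` integrable. Indeed
`F_X(t) - F_Y(t)` is the expectation of the oriented indicator of the interval from `X` to `Y` at
`t`. By Fubini, `F_X - F_Y` is therefore integrable, with norm at most `E|X - Y|`, and its Fourier
transform is the expectation of `∫_X^Y exp(ist) dt = (exp(isY) - exp(isX)) / (is)`. As `F_X - F_Y`
is bounded as well, it is square integrable, and Plancherel applies.
-/

section Plancherel

open scoped FourierTransform SchwartzMap

theorem integral_norm_sq_eq_norm_toLp_sq {α E : Type*} [MeasurableSpace α] {μ : Measure α}
    [NormedAddCommGroup E] {f : α → E} (hf : MemLp f 2 μ) :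
    ∫ x, ‖f x‖ ^ 2 ∂μ = ‖hf.toLp f‖ ^ 2 := by
  rw [Lp.norm_toLp, toReal_eLpNorm hf.aestronglyMeasurable,
    lpNorm_eq_integral_norm_rpow_toReal two_ne_zero ENNReal.ofNat_ne_top hf.aestronglyMeasurable,
    ← Real.rpow_natCast, ← Real.rpow_mul (by positivity)]
  simp

variable {V H : Type*} [NormedAddCommGroup V] [InnerProductSpace ℝ V] [FiniteDimensional ℝ V]
  [MeasurableSpace V] [BorelSpace V] [NormedAddCommGroup H] [InnerProductSpace ℂ H]
  [CompleteSpace H]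

theorem integral_fourier_smul_eq_integral_smul_fourier {φ : V → ℂ} {f : V → H}
    (hφ : Integrable φ) (hf : Integrable f) : ∫ x, 𝓕 φ x • f x = ∫ x, φ x • 𝓕 f x := by
  simpa using! VectorFourier.integral_fourierIntegral_smul_eq_flip (L := innerₗ V)
    Real.continuous_fourierChar continuous_inner hφ hf

theorem fourier_toLp_ae_eq {f : V → H} (hf : Integrable f) (hf2 : MemLp f 2 volume) :
    (𝓕 (hf2.toLp f) : Lp H 2 (volume : Measure V)) =ᵐ[volume] 𝓕 f := by
  have hcont : Continuous (𝓕 f) :=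
    VectorFourier.fourierIntegral_continuous Real.continuous_fourierChar
      (innerSL ℝ).continuous₂ hf
  -- The two transforms define the same tempered distribution.
  refine ae_eq_of_integral_contDiff_smul_eq ((Lp.memLp _).locallyIntegrable (by norm_num))
    hcont.locallyIntegrable fun φ hφ hφs ↦ ?_
  have hφs' : HasCompactSupport (ofRealCLM ∘ φ) := hφs.comp_left rfl
  set Φ : 𝓢(V, ℂ) := hφs'.toSchwartzMap (ofRealCLM.contDiff.comp hφ)
  have hΦ (u : V → H) : ∫ x, φ x • u x = ∫ x, Φ x • u x :=
    integral_congr_ae (.of_forall fun x ↦ (Complex.coe_smul (φ x) (u x)).symm)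
  calc ∫ x, φ x • (𝓕 (hf2.toLp f) : Lp H 2 (volume : Measure V)) x
    _ = ∫ x, 𝓕 Φ x • hf2.toLp f x := by
      simpa [hΦ] using (congrArg (fun T : 𝓢'(V, H) ↦ T Φ)
        (Lp.fourier_toTemperedDistribution_eq (hf2.toLp f))).symm
    _ = ∫ x, 𝓕 Φ x • f x := by
      refine integral_congr_ae ?_
      filter_upwards [hf2.coeFn_toLp] with x hx
      rw [hx]
    _ = ∫ x, φ x • 𝓕 f x := by
      rw [hΦ, SchwartzMap.fourier_coe,
        integral_fourier_smul_eq_integral_smul_fourier Φ.integrable hf]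

theorem integral_norm_sq_fourier {f : V → H} (hf : Integrable f) (hf2 : MemLp f 2 volume) :
    ∫ ξ, ‖𝓕 f ξ‖ ^ 2 = ∫ x, ‖f x‖ ^ 2 := by
  have hae := fourier_toLp_ae_eq hf hf2
  have h𝓕 : MemLp (𝓕 f) 2 volume := (memLp_congr_ae hae).1 (Lp.memLp _)
  have htoLp : h𝓕.toLp (𝓕 f) = 𝓕 (hf2.toLp f) := by
    rw [← Lp.toLp_coeFn (𝓕 (hf2.toLp f)) (Lp.memLp _)]
    exact MemLp.toLp_congr _ _ hae.symm
  rw [integral_norm_sq_eq_norm_toLp_sq h𝓕, integral_norm_sq_eq_norm_toLp_sq hf2, htoLp,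
    Lp.norm_fourier_eq]

end Plancherel

section OrientedIndicator

open Set

/-- The indicator function of the interval from `a` to `b`, counted with sign `-1` when `b < a`.
It is the difference of the Heaviside steps at `a` and `b`; the closed left endpoint matches the
right-continuity of cumulative distribution functions. -/
noncomputable def orientedIndicator (a b : ℝ) : ℝ → ℝ :=
  (Ici a).indicator 1 - (Ici b).indicator 1

theorem orientedIndicator_symm (a b : ℝ) : orientedIndicator b a = -orientedIndicator a b :=
  (neg_sub _ _).symm

theorem orientedIndicator_of_le {a b : ℝ} (h : a ≤ b) :
    orientedIndicator a b = (Ico a b).indicator 1 := by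
  rw [orientedIndicator, ← indicator_sdiff (Ici_subset_Ici.2 h), Ici_sdiff_Ici]

theorem integral_orientedIndicator_smul {E : Type*} [NormedAddCommGroup E] [NormedSpace ℝ E]
    (a b : ℝ) (f : ℝ → E) : ∫ t, orientedIndicator a b t • f t = ∫ t in a..b, f t := by
  wlog h : a ≤ b generalizing a b
  · rw [intervalIntegral.integral_symm, ← this b a (le_of_not_ge h), orientedIndicator_symm,
      ← integral_neg]
    simp
  · simp_rw [orientedIndicator_of_le h, ← indicator_smul_left, Pi.one_apply, one_smul]
    rw [integral_indicator measurableSet_Ico, integral_Ico_eq_integral_Ioc,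
      intervalIntegral.integral_of_le h]

theorem integrable_orientedIndicator (a b : ℝ) : Integrable (orientedIndicator a b) := by
  wlog h : a ≤ b generalizing a b
  · rw [orientedIndicator_symm]
    exact (this b a (le_of_not_ge h)).neg
  · rw [orientedIndicator_of_le h]
    exact (integrable_indicator_iff measurableSet_Ico).2 (integrableOn_const (by simp))

theorem integral_norm_orientedIndicator (a b : ℝ) :
    ∫ t, ‖orientedIndicator a b t‖ = |a - b| := by
  wlog h : a ≤ b generalizing a b
  · rw [abs_sub_comm, ← this b a (le_of_not_ge h), orientedIndicator_symm]
    simp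
  · simp [orientedIndicator_of_le h, norm_indicator_eq_indicator_norm, abs_sub_comm a b,
      abs_of_nonneg (sub_nonneg.2 h), h]

end OrientedIndicator

section CdfDiff

open Set
open scoped FourierTransform Real

/-- The difference `F_μ - F_ν` of the cumulative distribution functions of two finite measures. -/
noncomputable def cdfDiff (μ ν : Measure ℝ) (t : ℝ) : ℝ :=
  μ.real (Iic t) - ν.real (Iic t)

theorem norm_cdfDiff_le (μ ν : Measure ℝ) [IsFiniteMeasure μ] [IsFiniteMeasure ν] (t : ℝ) :
    ‖cdfDiff μ ν t‖ ≤ μ.real univ + ν.real univ :=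
  (norm_sub_le _ _).trans <| by
    simpa [abs_of_nonneg] using add_le_add (measureReal_mono (μ := μ) (subset_univ (Iic t)))
      (measureReal_mono (μ := ν) (subset_univ (Iic t)))

variable {Ω : Type*} [MeasurableSpace Ω] {P : Measure Ω} {X Y : Ω → ℝ}

theorem aestronglyMeasurable_indicator_Ici_prod (hX : AEMeasurable X P) :
    AEStronglyMeasurable (fun p : Ω × ℝ ↦ (Ici (X p.1)).indicator (1 : ℝ → ℝ) p.2)
      (P.prod volume) :=
  (aestronglyMeasurable_const (b := (1 : ℝ))).indicator₀
    (nullMeasurableSet_le hX.comp_fst measurable_snd.aemeasurable)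

theorem integrable_orientedIndicator_prod [SFinite P] (hX : AEMeasurable X P)
    (hY : AEMeasurable Y P) (hXY : Integrable (X - Y) P) :
    Integrable (fun p : Ω × ℝ ↦ orientedIndicator (X p.1) (Y p.1) p.2) (P.prod volume) := by
  have hmeas := (aestronglyMeasurable_indicator_Ici_prod hX).sub
    (aestronglyMeasurable_indicator_Ici_prod hY)
  refine (integrable_prod_iff hmeas).2
    ⟨.of_forall fun ω ↦ integrable_orientedIndicator (X ω) (Y ω), ?_⟩
  exact hXY.abs.congr (.of_forall fun ω ↦ (integral_norm_orientedIndicator (X ω) (Y ω)).symm)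

theorem integral_indicator_Ici_eq_real_map_Iic (hX : AEMeasurable X P) (t : ℝ) :
    ∫ ω, (Ici (X ω)).indicator 1 t ∂P = (P.map X).real (Iic t) := by
  calc ∫ ω, (Ici (X ω)).indicator 1 t ∂P
    _ = ∫ ω, (Iic t).indicator 1 (X ω) ∂P := rfl
    _ = ∫ x, (Iic t).indicator 1 x ∂P.map X :=
      (integral_map hX ((measurable_one.indicator measurableSet_Iic).aestronglyMeasurable)).symm
    _ = (P.map X).real (Iic t) := integral_indicator_one measurableSet_Iic

theorem integral_cexp_mul_eq_charFun_map (hX : AEMeasurable X P) (s : ℝ) :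
    ∫ ω, cexp (s * I * X ω) ∂P = charFun (P.map X) s := by
  rw [charFun_apply_real, integral_map hX (by fun_prop)]
  simp only [mul_right_comm]

variable [IsFiniteMeasure P]

theorem integral_orientedIndicator_eq_cdfDiff_map (hX : AEMeasurable X P)
    (hY : AEMeasurable Y P) (t : ℝ) :
    ∫ ω, orientedIndicator (X ω) (Y ω) t ∂P = cdfDiff (P.map X) (P.map Y) t := by
  have hint {Z : Ω → ℝ} (hZ : AEMeasurable Z P) :
      Integrable (fun ω ↦ (Ici (Z ω)).indicator (1 : ℝ → ℝ) t) P :=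
    (integrable_const (1 : ℝ)).indicator₀ (nullMeasurableSet_le hZ aemeasurable_const)
  rw [cdfDiff, ← integral_indicator_Ici_eq_real_map_Iic hX,
    ← integral_indicator_Ici_eq_real_map_Iic hY, ← integral_sub (hint hX) (hint hY)]
  rfl

theorem integrable_cdfDiff_map (hX : AEMeasurable X P) (hY : AEMeasurable Y P)
    (hXY : Integrable (X - Y) P) : Integrable (cdfDiff (P.map X) (P.map Y)) := by
  simpa only [integral_orientedIndicator_eq_cdfDiff_map hX hY] using
    (integrable_orientedIndicator_prod hX hY hXY).integral_prod_right

theorem memLp_two_cdfDiff_map (hX : AEMeasurable X P) (hY : AEMeasurable Y P)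
    (hXY : Integrable (X - Y) P) : MemLp (cdfDiff (P.map X) (P.map Y)) 2 volume := by
  have hint := integrable_cdfDiff_map hX hY hXY
  rw [memLp_two_iff_integrable_sq hint.aestronglyMeasurable]
  simpa only [sq] using hint.mul_bdd hint.aestronglyMeasurable
    (.of_forall (norm_cdfDiff_le (P.map X) (P.map Y)))

theorem integrable_cexp_mul (hX : AEMeasurable X P) (s : ℝ) :
    Integrable (fun ω ↦ cexp (s * I * X ω)) P := by
  refine (integrable_const (1 : ℝ)).mono' (by fun_prop) (.of_forall fun ω ↦ ?_)
  simp [Complex.norm_exp]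

theorem integral_cexp_mul_cdfDiff_map (hX : AEMeasurable X P) (hY : AEMeasurable Y P)
    (hXY : Integrable (X - Y) P) {s : ℝ} (hs : s ≠ 0) :
    ∫ t : ℝ, cexp (s * I * t) * cdfDiff (P.map X) (P.map Y) t
      = (charFun (P.map Y) s - charFun (P.map X) s) / (s * I) := by
  have hsI : (s * I : ℂ) ≠ 0 := by simp [hs]
  have hfubini : Integrable (fun p : Ω × ℝ ↦
      orientedIndicator (X p.1) (Y p.1) p.2 • cexp (s * I * p.2)) (P.prod volume) := by
    refine (integrable_orientedIndicator_prod hX hY hXY).smul_bdd 1 (by fun_prop)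
      (.of_forall fun p ↦ ?_)
    simp [Complex.norm_exp]
  calc ∫ t : ℝ, cexp (s * I * t) * cdfDiff (P.map X) (P.map Y) t
    _ = ∫ t : ℝ, ∫ ω, orientedIndicator (X ω) (Y ω) t • cexp (s * I * t) ∂P := by
      simp_rw [integral_smul_const, integral_orientedIndicator_eq_cdfDiff_map hX hY, real_smul,
        mul_comm]
    _ = ∫ ω, (∫ t : ℝ, orientedIndicator (X ω) (Y ω) t • cexp (s * I * t)) ∂P :=
      (integral_integral_swap hfubini).symm
    _ = ∫ ω, (cexp (s * I * Y ω) - cexp (s * I * X ω)) / (s * I) ∂P := by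
      simp_rw [integral_orientedIndicator_smul, integral_exp_mul_complex hsI]
    _ = (charFun (P.map Y) s - charFun (P.map X) s) / (s * I) := by
      rw [integral_div, integral_sub (integrable_cexp_mul hY s) (integrable_cexp_mul hX s),
        integral_cexp_mul_eq_charFun_map hX, integral_cexp_mul_eq_charFun_map hY]

theorem norm_fourier_cdfDiff_map (hX : AEMeasurable X P) (hY : AEMeasurable Y P)
    (hXY : Integrable (X - Y) P) {w : ℝ} (hw : w ≠ 0) :
    ‖𝓕 (fun t ↦ (cdfDiff (P.map X) (P.map Y) t : ℂ)) w‖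
      = ‖charFun (P.map X) (-(2 * π) * w) - charFun (P.map Y) (-(2 * π) * w)‖
        / |-(2 * π) * w| := by
  have hs : -(2 * π) * w ≠ 0 := by simp [hw, Real.pi_ne_zero]
  have hfourier : 𝓕 (fun t ↦ (cdfDiff (P.map X) (P.map Y) t : ℂ)) w
      = ∫ t : ℝ, cexp ((-(2 * π) * w : ℝ) * I * t) * cdfDiff (P.map X) (P.map Y) t := by
    rw [Real.fourier_real_eq_integral_exp_smul]
    refine integral_congr_ae (.of_forall fun t ↦ ?_)
    simp only [smul_eq_mul]
    congr 2
    push_cast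
    ring
  rw [hfourier, integral_cexp_mul_cdfDiff_map hX hY hXY hs, norm_div, norm_sub_rev, norm_mul,
    norm_I, mul_one, norm_real, Real.norm_eq_abs]

theorem integral_sq_cdfDiff_map (hX : AEMeasurable X P) (hY : AEMeasurable Y P)
    (hXY : Integrable (X - Y) P) :
    ∫ t, cdfDiff (P.map X) (P.map Y) t ^ 2
      = (2 * π)⁻¹ * ∫ ξ, ‖charFun (P.map X) ξ - charFun (P.map Y) ξ‖ ^ 2 / ξ ^ 2 := by
  calc ∫ t, cdfDiff (P.map X) (P.map Y) t ^ 2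
    _ = ∫ t, ‖(cdfDiff (P.map X) (P.map Y) t : ℂ)‖ ^ 2 := by simp
    _ = ∫ w, ‖𝓕 (fun t ↦ (cdfDiff (P.map X) (P.map Y) t : ℂ)) w‖ ^ 2 :=
      (integral_norm_sq_fourier (integrable_cdfDiff_map hX hY hXY).ofReal
        (memLp_two_cdfDiff_map hX hY hXY).ofReal).symm
    _ = ∫ w, ‖charFun (P.map X) (-(2 * π) * w) - charFun (P.map Y) (-(2 * π) * w)‖ ^ 2
          / (-(2 * π) * w) ^ 2 := by
      refine integral_congr_ae ?_
      filter_upwards [Measure.ae_ne volume 0] with w hw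
      rw [norm_fourier_cdfDiff_map hX hY hXY hw, div_pow, sq_abs]
    _ = (2 * π)⁻¹ * ∫ ξ, ‖charFun (P.map X) ξ - charFun (P.map Y) ξ‖ ^ 2 / ξ ^ 2 := by
      rw [Measure.integral_comp_mul_left
        (fun ξ ↦ ‖charFun (P.map X) ξ - charFun (P.map Y) ξ‖ ^ 2 / ξ ^ 2), abs_inv, abs_neg,
        abs_of_pos Real.two_pi_pos, smul_eq_mul]

end CdfDiff

section Gini

open Set
open scoped Real

theorem ft_eq_charFun_neg (μ : Measure ℝ) (ξ : ℝ) : ft μ ξ = charFun μ (-ξ) := by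
  rw [ft, charFun_apply_real]
  congr with x
  push_cast
  ring_nf

theorem integral_sq_cdfDiff_dirac_zero {μ : Measure ℝ} (hμ : μ (Iio 0) = 0) :
    ∫ t, cdfDiff μ (Measure.dirac 0) t ^ 2 = ∫ t in Ioi 0, (1 - μ.real (Iic t)) ^ 2 := by
  have hneg : ∀ t ∉ Ici (0 : ℝ), cdfDiff μ (Measure.dirac 0) t ^ 2 = 0 := by
    intro t ht
    rw [mem_Ici, not_le] at ht
    have hμt : μ.real (Iic t) = 0 := by
      rw [measureReal_def, measure_mono_null (Iic_subset_Iio.2 ht) hμ, ENNReal.toReal_zero]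
    simp [cdfDiff, hμt, measureReal_def, ht.not_ge]
  rw [← setIntegral_eq_integral_of_forall_compl_eq_zero hneg, integral_Ici_eq_integral_Ioi]
  refine setIntegral_congr_fun measurableSet_Ioi fun t ht ↦ ?_
  simp [cdfDiff, measureReal_def, (mem_Ioi.1 ht).le, sub_sq_comm]

theorem integral_sq_one_sub_real_Iic {μ : Measure ℝ} [IsProbabilityMeasure μ]
    (hμ : μ (Iio 0) = 0) (hint : Integrable id μ) :
    ∫ t in Ioi 0, (1 - μ.real (Iic t)) ^ 2 = (2 * π)⁻¹ * ∫ ξ, ‖1 - ft μ ξ‖ ^ 2 / ξ ^ 2 := by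
  have h := integral_sq_cdfDiff_map (P := μ) (X := id) (Y := fun _ ↦ 0) aemeasurable_id
    aemeasurable_const (hint.sub (integrable_const 0))
  rw [Measure.map_id, Measure.map_const, measure_univ, one_smul,
    integral_sq_cdfDiff_dirac_zero hμ] at h
  rw [h, ← integral_neg_eq_self]
  simp [ft_eq_charFun_neg, norm_sub_rev]

end Gini

theorem stmt_17 (μ : Measure ℝ) [IsProbabilityMeasure μ]
    (hsupp : μ {x : ℝ | x < 0} = 0)
    (hint : Integrable (fun x : ℝ => x) μ)
    (m : ℝ) (hm : m = ∫ x, x ∂μ) (hmpos : 0 < m) :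
    1 - (1 / m) * ∫ x in Set.Ioi (0 : ℝ), (1 - (μ (Set.Iic x)).toReal) ^ 2
      = 1 - (1 / (2 * Real.pi * m)) * ∫ ξ : ℝ, ‖1 - ft μ ξ‖ ^ 2 / ξ ^ 2 := by
  have hparseval := integral_sq_one_sub_real_Iic hsupp hint
  simp only [measureReal_def] at hparseval
  rw [hparseval]
  field_simp
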